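/- Let h be a symmetric bilinear form on V with associated symmetric endomorphism H. Every algebraic curvature tensor Rm on V satisfies Ric_{h⧆g}(Rm) = −2·(h ⧆ Ric) − 2·(g ⧆ c) − (n−2)·H(Rm) + 4·tr(h)·Rm, where Ric(X,Z) = Σ_a Rm(X,e_a,Z,e_a) is the Ricci contraction of Rm and c(X,Z) = Σ_a Rm(X, H(e_a), Z, e_a) = c_{24}(h⊗Rm)(X,Z). -/

import Mathlib

/-!
The curvature endomorphism of `h ⧆ g` is
`R(X,Y)Z = h(X,Z) Y - g(Y,Z) H X + g(X,Z) H Y - h(Y,Z) X` (`curvOp_knProd`). In the double sum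
over slots `(i, m)` defining `Ric_{h ⧆ g}(T)`, the diagonal `i = m` contributes
`(n - 2) T(…, H Xᵢ, …) + tr(h) T` (`sum_curvOp_diag`), which accounts for the last two terms of
the formula. For `i ≠ m` one gets (`sum_curvOp_offDiag`) `h(Xᵢ,X_m)` and `g(Xᵢ,X_m)` times a trace
of `T` over the slots `i, m`, plus two evaluations of `T` in which the arguments of the slots `i`
and `m` are swapped and `H` is applied to one of them.

For an algebraic curvature tensor, the traces over the slots `{1,2}` and `{3,4}` vanish by
antisymmetry (and symmetry of `H`), and the other ones are, up to sign, `Ric` and `c`, which gives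
the two Kulkarni–Nomizu products. The swapped terms cancel: for each slot `p`, the sum of the
three transpositions moving `p`, applied to a curvature tensor, is zero by the
Bianchi identity (`swap1`, …, `swap4` in the proof of the theorem).
-/

open scoped RealInnerProductSpace BigOperators
open Finset

noncomputable section

variable {V : Type*} [NormedAddCommGroup V] [InnerProductSpace ℝ V]

/-- The action `(L T)(X₁,…,X_k) = −Σᵢ T(X₁,…,L(Xᵢ),…,X_k)` of a map `L : V → V`
on a `(0,k)`-tensor `T`. -/
def tact {k : ℕ} (L : V → V) (T : (Fin k → V) → ℝ) (X : Fin k → V) : ℝ :=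
  -∑ i, T (Function.update X i (L (X i)))

/-- The Kulkarni–Nomizu product of two bilinear forms. -/
def knProd (s₁ s₂ : V → V → ℝ) (X Y Z W : V) : ℝ :=
  s₁ X Z * s₂ Y W - s₁ X W * s₂ Y Z + s₁ Y W * s₂ X Z - s₁ Y Z * s₂ X W

/-- The inner product `g` as a bilinear form. -/
def gf (X Y : V) : ℝ := ⟪X, Y⟫

/-- The curvature endomorphism `R(X,Y)`, determined by `g(R(X,Y)Z,W) = R(X,Y,Z,W)`,
expressed via the orthonormal basis `e`. -/
def curvOp {n : ℕ} (e : Fin n → V) (R : V → V → V → V → ℝ) (X Y Z : V) : V :=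
  ∑ a, R X Y Z (e a) • e a

/-- The curvature term `Ric_R(T)(X₁,…,X_k) = Σᵢ Σⱼ ((R(Xᵢ,eⱼ))T)(X₁,…,eⱼ,…,X_k)`. -/
def ricTerm {n k : ℕ} (e : Fin n → V) (R : V → V → V → V → ℝ)
    (T : (Fin k → V) → ℝ) (X : Fin k → V) : ℝ :=
  ∑ i : Fin k, ∑ j : Fin n, tact (curvOp e R (X i) (e j)) T (Function.update X i (e j))

/-- The inner product of two `(0,k)`-tensors with respect to the orthonormal basis `e`. -/
def tinner {n k : ℕ} (e : Fin n → V) (S T : (Fin k → V) → ℝ) : ℝ :=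
  ∑ I : Fin k → Fin n, S (fun m => e (I m)) * T (fun m => e (I m))

/-- The skew endomorphism `(A ∧ B)Z = g(A,Z)B − g(B,Z)A`. -/
def wedgeOp (A B Z : V) : V := ⟪A, Z⟫ • B - ⟪B, Z⟫ • A

lemma sum_inner_mul {n : ℕ} (e : OrthonormalBasis (Fin n) ℝ V) (L : V →ₗ[ℝ] ℝ) (X : V) :
    ∑ j, ⟪e j, X⟫ * L (e j) = L X := by
  conv_rhs => rw [← e.sum_repr' X]
  simp [map_sum]

lemma curvOp_knProd {n : ℕ} (e : OrthonormalBasis (Fin n) ℝ V) (H : V →ₗ[ℝ] V)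
    (h : V → V → ℝ) (hh : ∀ X Y : V, h X Y = ⟪H X, Y⟫) (X Y Z : V) :
    curvOp e (knProd h gf) X Y Z
      = h X Z • Y - ⟪Y, Z⟫ • H X + ⟪X, Z⟫ • H Y - h Y Z • X := by
  conv_rhs => rw [← e.sum_repr' (h X Z • Y - ⟪Y, Z⟫ • H X + ⟪X, Z⟫ • H Y - h Y Z • X)]
  refine Finset.sum_congr rfl fun a _ => ?_
  congr 1
  simp only [knProd, gf, hh, inner_add_right, inner_sub_right, inner_smul_right,
    real_inner_comm (e a)]
  ring

lemma sum_curvOp_diag {n : ℕ} (e : OrthonormalBasis (Fin n) ℝ V) (H : V →ₗ[ℝ] V)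
    (h : V → V → ℝ) (hh : ∀ X Y : V, h X Y = ⟪H X, Y⟫) (L : V →ₗ[ℝ] ℝ) (X : V) :
    ∑ j, L (curvOp e (knProd h gf) X (e j) (e j))
      = -((n : ℝ) - 2) * L (H X) - (∑ a, h (e a) (e a)) * L X := by
  have h1 := sum_inner_mul e L (H X)
  have h2 := sum_inner_mul e (L ∘ₗ H) X
  simp only [LinearMap.comp_apply] at h2
  simp only [curvOp_knProd e H h hh, map_add, map_sub, map_smul, smul_eq_mul,
    Finset.sum_add_distrib, Finset.sum_sub_distrib, ← Finset.sum_mul]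
  have h3 : ∑ j, h X (e j) * L (e j) = L (H X) := by
    rw [← h1]; exact Finset.sum_congr rfl fun j _ => by rw [hh, real_inner_comm]
  have h4 : ∑ j, ⟪X, e j⟫ * L (H (e j)) = L (H X) := by
    rw [← h2]; exact Finset.sum_congr rfl fun j _ => by rw [real_inner_comm]
  have h5 : ∑ j, ⟪e j, e j⟫ = (n : ℝ) := by simp
  rw [h3, h4, h5]
  ring

lemma sum_curvOp_offDiag {n : ℕ} (e : OrthonormalBasis (Fin n) ℝ V) (H : V →ₗ[ℝ] V)
    (hHsym : ∀ X Y : V, ⟪H X, Y⟫ = ⟪X, H Y⟫)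
    (h : V → V → ℝ) (hh : ∀ X Y : V, h X Y = ⟪H X, Y⟫) (B : V →ₗ[ℝ] V →ₗ[ℝ] ℝ) (X Z : V) :
    ∑ j, B (e j) (curvOp e (knProd h gf) X (e j) Z)
      = h X Z * ∑ j, B (e j) (e j) - B Z (H X)
        + ⟪X, Z⟫ * ∑ j, B (e j) (H (e j)) - B (H Z) X := by
  have h1 := sum_inner_mul e (B.flip (H X)) Z
  have h2 := sum_inner_mul e (B.flip X) (H Z)
  simp only [LinearMap.flip_apply] at h1 h2
  simp only [curvOp_knProd e H h hh, map_add, map_sub, map_smul, smul_eq_mul,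
    Finset.sum_add_distrib, Finset.sum_sub_distrib, ← Finset.mul_sum]
  have h4 : ∑ j, h (e j) Z * B (e j) X = B (H Z) X := by
    rw [← h2]; exact Finset.sum_congr rfl fun j _ => by rw [hh, hHsym]
  rw [h1, h4]

/-- The bilinear form obtained from a multilinear one by freezing all slots but `i ≠ m`. -/
def slotForm {k : ℕ} (T : MultilinearMap ℝ (fun _ : Fin k => V) ℝ) (X : Fin k → V)
    (i m : Fin k) (him : i ≠ m) : V →ₗ[ℝ] V →ₗ[ℝ] ℝ :=
  LinearMap.mk₂ ℝ (fun a b => T (Function.update (Function.update X i a) m b))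
    (fun a a' b => by simp only [Function.update_comm him, T.map_update_add])
    (fun r a b => by simp only [Function.update_comm him, T.map_update_smul])
    (fun a b b' => by simp only [T.map_update_add])
    (fun r a b => by simp only [T.map_update_smul])

/-- The curvature term of `h ⧆ g` on an arbitrary multilinear form, split into the contributions
of the pairs of slots `(i, m)`; no curvature symmetries of `T` enter here. -/
lemma ricTerm_knProd {n k : ℕ} (e : OrthonormalBasis (Fin n) ℝ V) (H : V →ₗ[ℝ] V)
    (hHsym : ∀ X Y : V, ⟪H X, Y⟫ = ⟪X, H Y⟫)
    (h : V → V → ℝ) (hh : ∀ X Y : V, h X Y = ⟪H X, Y⟫)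
    (T : MultilinearMap ℝ (fun _ : Fin k => V) ℝ) (X : Fin k → V) :
    ricTerm e (knProd h gf) T X = -∑ i, ∑ m, if i = m then
        -((n : ℝ) - 2) * T (Function.update X i (H (X i))) - (∑ a, h (e a) (e a)) * T X
      else
        h (X i) (X m) * ∑ j, T (Function.update (Function.update X i (e j)) m (e j))
        - T (Function.update (Function.update X i (X m)) m (H (X i)))
        + ⟪X i, X m⟫ * ∑ j, T (Function.update (Function.update X i (e j)) m (H (e j)))
        - T (Function.update (Function.update X i (H (X m))) m (X i)) := by
  simp only [ricTerm, tact, Finset.sum_neg_distrib]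
  congr 1
  refine Finset.sum_congr rfl fun i _ => ?_
  rw [Finset.sum_comm]
  refine Finset.sum_congr rfl fun m _ => ?_
  split_ifs with him
  · subst him
    simpa using sum_curvOp_diag e H h hh (T.toLinearMap X i) (X i)
  · simpa [slotForm, Function.update_of_ne (Ne.symm him)] using
      sum_curvOp_offDiag e H hHsym h hh (slotForm T X i m him) (X i) (X m)

/-- A self-adjoint endomorphism may be moved between the two slots of a trace. -/
lemma sum_apply_symm {n : ℕ} (e : OrthonormalBasis (Fin n) ℝ V) (H : V →ₗ[ℝ] V)
    (hHsym : ∀ X Y : V, ⟪H X, Y⟫ = ⟪X, H Y⟫) (B : V →ₗ[ℝ] V →ₗ[ℝ] ℝ) :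
    ∑ j, B (e j) (H (e j)) = ∑ j, B (H (e j)) (e j) := by
  have h1 : ∀ j, B (e j) (H (e j)) = ∑ i, ⟪e i, H (e j)⟫ * B (e j) (e i) :=
    fun j => (sum_inner_mul e (B (e j)) (H (e j))).symm
  have h2 : ∀ j, B (H (e j)) (e j) = ∑ i, ⟪e i, H (e j)⟫ * B (e i) (e j) :=
    fun j => (sum_inner_mul e (B.flip (e j)) (H (e j))).symm
  simp only [h1, h2]
  rw [Finset.sum_comm]
  refine Finset.sum_congr rfl fun i _ => Finset.sum_congr rfl fun j _ => ?_
  rw [← hHsym, real_inner_comm]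

lemma update_vec_0 {E : Type*} (A B C D Z : E) :
    Function.update ![A, B, C, D] 0 Z = ![Z, B, C, D] := by
  funext i; fin_cases i <;> rfl

lemma update_vec_1 {E : Type*} (A B C D Z : E) :
    Function.update ![A, B, C, D] 1 Z = ![A, Z, C, D] := by
  funext i; fin_cases i <;> rfl

lemma update_vec_2 {E : Type*} (A B C D Z : E) :
    Function.update ![A, B, C, D] 2 Z = ![A, B, Z, D] := by
  funext i; fin_cases i <;> rfl

lemma update_vec_3 {E : Type*} (A B C D Z : E) :
    Function.update ![A, B, C, D] 3 Z = ![A, B, C, Z] := by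
  funext i; fin_cases i <;> rfl

/-- Proposition 3.3(3): the weighted curvature term on algebraic curvature
tensors. -/
theorem stmt11 {n : ℕ} (e : OrthonormalBasis (Fin n) ℝ V)
    (H : V →ₗ[ℝ] V) (hHsym : ∀ X Y : V, ⟪H X, Y⟫ = ⟪X, H Y⟫)
    (h : V → V → ℝ) (hh : ∀ X Y : V, h X Y = ⟪H X, Y⟫)
    (Rm : MultilinearMap ℝ (fun _ : Fin 4 => V) ℝ)
    (hA : ∀ X Y Z W : V, Rm ![X, Y, Z, W] = -Rm ![Y, X, Z, W])
    (hP : ∀ X Y Z W : V, Rm ![X, Y, Z, W] = Rm ![Z, W, X, Y])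
    (hB : ∀ X Y Z W : V,
      Rm ![X, Y, Z, W] + Rm ![Y, Z, X, W] + Rm ![Z, X, Y, W] = 0)
    (ricc : V → V → ℝ) (hric : ∀ X Z : V, ricc X Z = ∑ a : Fin n, Rm ![X, e a, Z, e a])
    (c : V → V → ℝ) (hc : ∀ X Z : V, c X Z = ∑ a : Fin n, Rm ![X, H (e a), Z, e a]) :
    ∀ X₁ X₂ X₃ X₄ : V,
      ricTerm ⇑e (knProd h gf) ⇑Rm ![X₁, X₂, X₃, X₄] =
        -2 * knProd h ricc X₁ X₂ X₃ X₄
        - 2 * knProd gf c X₁ X₂ X₃ X₄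
        - ((n : ℝ) - 2) * tact ⇑H ⇑Rm ![X₁, X₂, X₃, X₄]
        + 4 * (∑ a : Fin n, h (e a) (e a)) * Rm ![X₁, X₂, X₃, X₄] := by
  intro X₁ X₂ X₃ X₄
  have hA' : ∀ X Y Z W : V, Rm ![X, Y, Z, W] = -Rm ![X, Y, W, Z] := fun X Y Z W => by
    rw [hP, hA, hP]
  have hsymm : ∀ Y W : V, ∑ j, Rm ![Y, e j, W, H (e j)] = c Y W := fun Y W => by
    rw [hc]
    simpa [slotForm, update_vec_0, update_vec_1, update_vec_3] using
      sum_apply_symm e H hHsym (slotForm Rm ![Y, 0, W, 0] 1 3 (by decide))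
  have hsymm12 : ∀ Z W : V, ∑ j, Rm ![e j, H (e j), Z, W] = 0 := fun Z W => by
    have h1 : ∑ j, Rm ![e j, H (e j), Z, W] = ∑ j, Rm ![H (e j), e j, Z, W] := by
      simpa [slotForm, update_vec_0, update_vec_1, update_vec_3] using
        sum_apply_symm e H hHsym (slotForm Rm ![0, 0, Z, W] 0 1 (by decide))
    have h2 : ∑ j, Rm ![e j, H (e j), Z, W] = -∑ j, Rm ![H (e j), e j, Z, W] := by
      rw [← Finset.sum_neg_distrib]
      exact Finset.sum_congr rfl fun j _ => hA _ _ _ _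
    linarith
  have hz : ∀ A Z W : V, Rm ![A, A, Z, W] = 0 := fun A Z W => by
    linarith [hA A A Z W]
  -- for each slot `p`, the sum over the three transpositions moving slot `p` vanishes
  have swap1 : ∀ A B C D : V,
      Rm ![B, A, C, D] + Rm ![C, B, A, D] + Rm ![D, B, C, A] = 0 := fun A B C D => by
    linarith [hB A B C D, hA B A C D, hA C B A D, hP D B C A, hA' C A D B]
  have swap2 : ∀ A B C D : V,
      Rm ![B, A, C, D] + Rm ![A, C, B, D] + Rm ![A, D, C, B] = 0 := fun A B C D => by
    linarith [swap1 B A C D, hA A C B D, hA A D C B, hA A B C D, hA B A C D]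
  have swap3 : ∀ A B C D : V,
      Rm ![C, B, A, D] + Rm ![A, C, B, D] + Rm ![A, B, D, C] = 0 := fun A B C D => by
    linarith [swap1 C D A B, hP C B A D, hP A C B D, hP A B D C]
  have swap4 : ∀ A B C D : V,
      Rm ![D, B, C, A] + Rm ![A, D, C, B] + Rm ![A, B, D, C] = 0 := fun A B C D => by
    linarith [swap2 C D A B, hP D B C A, hP A D C B, hP A B D C]
  -- the traces over each pair of slots, in terms of `ricc` and `c`
  have r13 : ∀ Y W : V, ∑ j, Rm ![e j, Y, e j, W] = ricc Y W := fun Y W => by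
    rw [hric]; exact Finset.sum_congr rfl fun j _ => by rw [hA, hA', neg_neg]
  have r14 : ∀ Y Z : V, ∑ j, Rm ![e j, Y, Z, e j] = -ricc Y Z := fun Y Z => by
    rw [hric, ← Finset.sum_neg_distrib]; exact Finset.sum_congr rfl fun j _ => hA _ _ _ _
  have r23 : ∀ X W : V, ∑ j, Rm ![X, e j, e j, W] = -ricc X W := fun X W => by
    rw [hric, ← Finset.sum_neg_distrib]; exact Finset.sum_congr rfl fun j _ => hA' _ _ _ _
  have c13 : ∀ Y W : V, ∑ j, Rm ![e j, Y, H (e j), W] = c Y W := fun Y W => by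
    rw [← hsymm]; exact Finset.sum_congr rfl fun j _ => by rw [hA, hA', neg_neg]
  have c31 : ∀ Y W : V, ∑ j, Rm ![H (e j), Y, e j, W] = c Y W := fun Y W => by
    rw [hc]; exact Finset.sum_congr rfl fun j _ => by rw [hA, hA', neg_neg]
  have c14 : ∀ Y Z : V, ∑ j, Rm ![e j, Y, Z, H (e j)] = -c Y Z := fun Y Z => by
    rw [← hsymm, ← Finset.sum_neg_distrib]; exact Finset.sum_congr rfl fun j _ => hA _ _ _ _
  have c41 : ∀ Y Z : V, ∑ j, Rm ![H (e j), Y, Z, e j] = -c Y Z := fun Y Z => by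
    rw [hc, ← Finset.sum_neg_distrib]; exact Finset.sum_congr rfl fun j _ => hA _ _ _ _
  have c23 : ∀ X W : V, ∑ j, Rm ![X, e j, H (e j), W] = -c X W := fun X W => by
    rw [← hsymm, ← Finset.sum_neg_distrib]; exact Finset.sum_congr rfl fun j _ => hA' _ _ _ _
  have c32 : ∀ X W : V, ∑ j, Rm ![X, H (e j), e j, W] = -c X W := fun X W => by
    rw [hc, ← Finset.sum_neg_distrib]; exact Finset.sum_congr rfl fun j _ => hA' _ _ _ _
  have c21 : ∀ Z W : V, ∑ j, Rm ![H (e j), e j, Z, W] = 0 := fun Z W => by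
    rw [← neg_zero, ← hsymm12 Z W, ← Finset.sum_neg_distrib]
    exact Finset.sum_congr rfl fun j _ => hA _ _ _ _
  have c34 : ∀ X Y : V, ∑ j, Rm ![X, Y, e j, H (e j)] = 0 := fun X Y => by
    rw [← hsymm12 X Y]; exact Finset.sum_congr rfl fun j _ => hP _ _ _ _
  have c43 : ∀ X Y : V, ∑ j, Rm ![X, Y, H (e j), e j] = 0 := fun X Y => by
    rw [← c21 X Y]; exact Finset.sum_congr rfl fun j _ => hP _ _ _ _
  have hz' : ∀ X Y A : V, Rm ![X, Y, A, A] = 0 := fun X Y A => by rw [hP, hz]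
  have hcomm : ∀ X Y : V, h Y X = h X Y := fun X Y => by
    rw [hh, hh, hHsym, real_inner_comm]
  rw [ricTerm_knProd e H hHsym h hh]
  have v0 : ∀ A B C D : V, ![A, B, C, D] 0 = A := fun _ _ _ _ => rfl
  have v1 : ∀ A B C D : V, ![A, B, C, D] 1 = B := fun _ _ _ _ => rfl
  have v2 : ∀ A B C D : V, ![A, B, C, D] 2 = C := fun _ _ _ _ => rfl
  have v3 : ∀ A B C D : V, ![A, B, C, D] 3 = D := fun _ _ _ _ => rfl
  simp only [Fin.sum_univ_four, tact, knProd, gf, update_vec_0, update_vec_1, update_vec_2,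
    update_vec_3, v0, v1, v2, v3, Fin.reduceEq, if_true, if_false, hz, hz', Finset.sum_const_zero, ← hric, r13, r14, r23, hsymm, ← hc,
    c13, c31, c14, c41, c23, c32, hsymm12, c21, c34, c43]
  rw [hcomm X₁ X₂, hcomm X₁ X₃, hcomm X₁ X₄, hcomm X₂ X₃, hcomm X₂ X₄, hcomm X₃ X₄,
    real_inner_comm X₁ X₂, real_inner_comm X₁ X₃, real_inner_comm X₁ X₄,
    real_inner_comm X₂ X₃, real_inner_comm X₂ X₄, real_inner_comm X₃ X₄]
  linear_combination 2 * swap1 (H X₁) X₂ X₃ X₄ + 2 * swap2 X₁ (H X₂) X₃ X₄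
    + 2 * swap3 X₁ X₂ (H X₃) X₄ + 2 * swap4 X₁ X₂ X₃ (H X₄)
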